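/- Let A be any real 3×3 matrix and let g : ℝ → M₃(ℝ), Ω : ℝ → ℝ³ be smooth with g(t)ᵀ·g(t) = E and g'(t) = g(t)·hat(Ω(t)) for all t, and suppose 𝕀·Ω'(t) = (𝕀·Ω(t))×Ω(t) − m·r²·g(t)ᵀ·Aᵀ·A·g(t)·Ω'(t) for all t. Define the kinetic momentum K(t) := 𝕀·Ω(t) + m·r²·g(t)ᵀ·Aᵀ·A·g(t)·Ω(t) and the Poisson vector γ(t) := g(t)ᵀ·e₃, where e₃ is the third standard basis vector of ℝ³. Then for all t: K'(t) = K(t)×Ω(t) and γ'(t) = γ(t)×Ω(t). -/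

import Mathlib

/-!
Since `hat Ω` is skew-symmetric, the reconstruction equation `g' = g hat(Ω)` gives, for every curve
`u` in the space frame, `(gᵀ u)' = (gᵀ u) × Ω + gᵀ u'` (`hasDerivAt_transpose_mulVec`). For the
constant curve `u = e₃` this is the Poisson equation. For `u = Aᵀ A g Ω` one has
`u' = Aᵀ A g Ω'`, because `hat(Ω) Ω = Ω × Ω = 0`; hence
`K' = 𝕀 Ω' + m r² gᵀ Aᵀ A g Ω' + m r² (gᵀ Aᵀ A g Ω) × Ω`, and the equation of motion says that the
first two terms add up to `(𝕀 Ω) × Ω`.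
-/

open Matrix

noncomputable section

/-- `ℝ³`. -/
abbrev R3 : Type := Fin 3 → ℝ

/-- The hat map: `hat(η) v = η × v`. -/
def hat (η : R3) : Matrix (Fin 3) (Fin 3) ℝ :=
  !![0, -η 2, η 1; η 2, 0, -η 0; -η 1, η 0, 0]

/-- The inertia tensor `𝕀 = diag(I₁,I₂,I₃)`. -/
def Imat (I1 I2 I3 : ℝ) : Matrix (Fin 3) (Fin 3) ℝ := Matrix.diagonal ![I1, I2, I3]

/-- The kinetic momentum `K = 𝕀 Ω + m r² gᵀ Aᵀ A g Ω`. -/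
def Kmom (m r I1 I2 I3 : ℝ) (A : Matrix (Fin 3) (Fin 3) ℝ)
    (g : ℝ → Matrix (Fin 3) (Fin 3) ℝ) (Ω : ℝ → R3) (t : ℝ) : R3 :=
  Imat I1 I2 I3 *ᵥ Ω t + (m * r^2) • (((g t)ᵀ * Aᵀ * A * g t) *ᵥ Ω t)

/-- The Poisson vector `γ = gᵀ e₃`. -/
def pvec (g : ℝ → Matrix (Fin 3) (Fin 3) ℝ) (t : ℝ) : R3 := (g t)ᵀ *ᵥ ![0, 0, 1]

lemma hat_mulVec (η v : R3) : hat η *ᵥ v = crossProduct η v := by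
  ext i
  fin_cases i <;> simp [hat, cross_apply, Matrix.mulVec, dotProduct, Fin.sum_univ_three] <;> ring

lemma hat_transpose (η : R3) : (hat η)ᵀ = -hat η := by
  ext i j
  fin_cases i <;> fin_cases j <;> simp [hat]

/-- The Leibniz rule for a matrix curve, differentiated entrywise, applied to a vector curve. -/
lemma hasDerivAt_mulVec {M : ℝ → Matrix (Fin 3) (Fin 3) ℝ} {M' : Matrix (Fin 3) (Fin 3) ℝ}
    {u : ℝ → R3} {u' : R3} {t : ℝ}
    (hM : ∀ i j, HasDerivAt (fun s => M s i j) (M' i j) t) (hu : HasDerivAt u u' t) :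
    HasDerivAt (fun s => M s *ᵥ u s) (M' *ᵥ u t + M t *ᵥ u') t := by
  rw [hasDerivAt_pi] at hu ⊢
  intro i
  have h := HasDerivAt.fun_sum (u := Finset.univ) fun j _ => (hM i j).mul (hu j)
  simpa [Matrix.mulVec, dotProduct, Finset.sum_add_distrib] using h

lemma hasDerivAt_const_mulVec (M : Matrix (Fin 3) (Fin 3) ℝ) {u : ℝ → R3} {u' : R3} {t : ℝ}
    (hu : HasDerivAt u u' t) : HasDerivAt (fun s => M *ᵥ u s) (M *ᵥ u') t := by
  simpa using hasDerivAt_mulVec (M := fun _ => M) (M' := 0)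
    (fun i j => by simpa using hasDerivAt_const t (M i j)) hu

/-- The transport formula relating time derivatives in the space frame and in the body frame. -/
lemma hasDerivAt_transpose_mulVec {g : ℝ → Matrix (Fin 3) (Fin 3) ℝ} {ω : R3} {t : ℝ}
    (hg : ∀ i j, HasDerivAt (fun s => g s i j) ((g t * hat ω) i j) t)
    {u : ℝ → R3} {u' : R3} (hu : HasDerivAt u u' t) :
    HasDerivAt (fun s => (g s)ᵀ *ᵥ u s)
      (crossProduct ((g t)ᵀ *ᵥ u t) ω + (g t)ᵀ *ᵥ u') t := by
  have h := hasDerivAt_mulVec (M := fun s => (g s)ᵀ) (M' := (g t * hat ω)ᵀ)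
    (fun i j => hg j i) hu
  rwa [Matrix.transpose_mul, hat_transpose, ← Matrix.mulVec_mulVec, Matrix.neg_mulVec, hat_mulVec,
    cross_anticomm] at h

/-- The space-frame angular velocity `g Ω` has derivative `g Ω'`, as `Ω × Ω = 0`. -/
lemma hasDerivAt_mulVec_angularVelocity {g : ℝ → Matrix (Fin 3) (Fin 3) ℝ} {Ω : ℝ → R3}
    {Ω' : R3} {t : ℝ}
    (hg : ∀ i j, HasDerivAt (fun s => g s i j) ((g t * hat (Ω t)) i j) t)
    (hΩ : HasDerivAt Ω Ω' t) :
    HasDerivAt (fun s => g s *ᵥ Ω s) (g t *ᵥ Ω') t := by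
  have h := hasDerivAt_mulVec hg hΩ
  rwa [← Matrix.mulVec_mulVec, hat_mulVec, cross_self, Matrix.mulVec_zero, zero_add] at h

/-- Along solutions of the decoupled rotational equation of a rigid body with a
generalized rolling constraint, the kinetic momentum `K` and the Poisson vector `γ`
evolve by `K' = K × Ω` and `γ' = γ × Ω`. -/
theorem stmt16 (m r I1 I2 I3 : ℝ) (hm : 0 < m) (hr : 0 < r)
    (h1 : 0 < I1) (h2 : 0 < I2) (h3 : 0 < I3)
    (A : Matrix (Fin 3) (Fin 3) ℝ)
    (g : ℝ → Matrix (Fin 3) (Fin 3) ℝ) (Ω Ωd : ℝ → R3)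
    (horth : ∀ t, (g t)ᵀ * g t = 1)
    (hg : ∀ t i j, HasDerivAt (fun s => g s i j) ((g t * hat (Ω t)) i j) t)
    (hΩ : ∀ t i, HasDerivAt (fun s => Ω s i) (Ωd t i) t)
    (hEq : ∀ t, Imat I1 I2 I3 *ᵥ Ωd t =
      crossProduct (Imat I1 I2 I3 *ᵥ Ω t) (Ω t) -
        (m * r^2) • (((g t)ᵀ * Aᵀ * A * g t) *ᵥ Ωd t)) :
    (∀ t i, HasDerivAt (fun s => Kmom m r I1 I2 I3 A g Ω s i)
      (crossProduct (Kmom m r I1 I2 I3 A g Ω t) (Ω t) i) t) ∧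
    (∀ t i, HasDerivAt (fun s => pvec g s i)
      (crossProduct (pvec g t) (Ω t) i) t) := by
  refine ⟨fun t => ?_, fun t => ?_⟩
  · have hΩt : HasDerivAt Ω (Ωd t) t := hasDerivAt_pi.2 (hΩ t)
    have hu := hasDerivAt_const_mulVec (Aᵀ * A) (hasDerivAt_mulVec_angularVelocity (hg t) hΩt)
    have hK := (hasDerivAt_const_mulVec (Imat I1 I2 I3) hΩt).add
      ((hasDerivAt_transpose_mulVec (hg t) hu).const_smul (m * r ^ 2))
    refine hasDerivAt_pi.1 ((hK.congr_deriv ?_).congr_of_eventuallyEq (.of_eq ?_))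
    · rw [hEq t]
      simp [Kmom, Matrix.mulVec_mulVec, Matrix.mul_assoc]
    · funext s
      simp [Kmom, Matrix.mulVec_mulVec, Matrix.mul_assoc]
  · refine hasDerivAt_pi.1 ((hasDerivAt_transpose_mulVec (hg t)
      (hasDerivAt_const t (![0, 0, 1] : R3))).congr_deriv ?_)
    rw [Matrix.mulVec_zero, add_zero, pvec]

end
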